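/- Let C ∈ ℝ and let f : S¹ → ℝ satisfy: (A) f(x) + f(−x) = πC for all x ∈ S¹; and (B) f is Lipschitz continuous, left-differentiable at every point of S¹, and ‖∂₋f‖_TV(S¹) < ∞. Then there exists a signed Borel measure λ on S¹ with T_#λ = −λ such that f(x) = ∫_{S¹} d_{S¹}(x,y) (λ + C·H¹)(dy) for all x ∈ S¹. -/

import Mathlib

open MeasureTheory Real Filter Set Complex
open scoped ENNReal NNReal Classical

noncomputable section

instance : MeasurableSpace Circle := borel Circle
instance : BorelSpace Circle := ⟨rfl⟩

namespace CirclePaper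

/-- The spherical (arc-length) distance on the unit circle `S¹ ⊆ ℝ² ≃ ℂ`:
`d_{S¹}(x,y) = arccos ⟨x,y⟩ = arccos (Re (x * conj y))`. -/
def dS1 (x y : Circle) : ℝ := Real.arccos (((x : ℂ) * (starRingEnd ℂ) (y : ℂ)).re)

/-- The antipodal map `T x = -x` (multiplication by `exp(iπ) = -1`). -/
def antipode (x : Circle) : Circle := Circle.exp π * x

/-- Integral of a function against a signed measure (via the Jordan decomposition). -/
def sInt (l : SignedMeasure Circle) (f : Circle → ℝ) : ℝ :=
  (∫ y, f y ∂l.toJordanDecomposition.posPart) - (∫ y, f y ∂l.toJordanDecomposition.negPart)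

/-- `f_λ(x) = ∫_{S¹} d_{S¹}(x,y) λ(dy)`. -/
def fRep (l : SignedMeasure Circle) (x : Circle) : ℝ := sInt l (fun y => dS1 x y)

/-- `f : S¹ → ℝ` has left derivative `L` at `x` w.r.t. the covering `q(t) = exp(it)`,
i.e. `(f(x +_q t) - f(x))/t → L` as `t → 0⁻`. -/
def HasLeftDerivCircleAt (f : Circle → ℝ) (L : ℝ) (x : Circle) : Prop :=
  Filter.Tendsto (fun t : ℝ => (f (Circle.exp t * x) - f x) / t)
    (nhdsWithin 0 (Set.Iio 0)) (nhds L)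

/-- `h : ℝ → ℝ` has left derivative `L` at `t`: `(h(t+s) - h(t))/s → L` as `s → 0⁻`. -/
def HasLeftDerivAtR (h : ℝ → ℝ) (L : ℝ) (t : ℝ) : Prop :=
  Filter.Tendsto (fun s : ℝ => (h (t + s) - h t) / s)
    (nhdsWithin 0 (Set.Iio 0)) (nhds L)

/-- The total variation `‖g‖_{TV(S¹)}` of `g : S¹ → ℝ`: the supremum of
`Σ |g(q(t_i)) - g(q(t_{i+1}))|` over partitions `0 = t_0 ≤ … ≤ t_{n+1} = 2π`. -/
def circleTV (g : Circle → ℝ) : ℝ≥0∞ := eVariationOn (g ∘ Circle.exp) (Set.Icc 0 (2 * π))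

/-- `f` is Lipschitz continuous with respect to the spherical distance. -/
def LipschitzCircle (f : Circle → ℝ) : Prop := ∃ K : ℝ, ∀ x y, |f x - f y| ≤ K * dS1 x y

/-- The normalized Hausdorff 1-measure on `S¹`, i.e. the rotation-invariant Borel
probability measure (the pushforward of normalized Lebesgue measure on `[0, 2π)`). -/
def hausOne : Measure Circle :=
  (ENNReal.ofReal (2 * π))⁻¹ • Measure.map Circle.exp (volume.restrict (Set.Ico 0 (2 * π)))

instance : IsFiniteMeasure hausOne := by
  constructor
  have h1 : (Measure.map Circle.exp (volume.restrict (Set.Ico 0 (2 * π)))) Set.univ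
      = volume (Set.Ico 0 (2 * π)) := by
    rw [Measure.map_apply Circle.exp.continuous.measurable MeasurableSet.univ]
    simp
  simp only [hausOne, Measure.smul_apply, smul_eq_mul, h1, Real.volume_Ico]
  refine ENNReal.mul_lt_top ?_ ?_
  · exact ENNReal.inv_lt_top.mpr (ENNReal.ofReal_pos.mpr (by positivity))
  · exact ENNReal.ofReal_lt_top

/-- The half-open arc `[x, T(x)) = {x +_q t : t ∈ [0, π)}` of length `π` starting at `x`. -/
def halfArc (x : Circle) : Set Circle := (fun t : ℝ => Circle.exp t * x) '' Set.Ico 0 π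

/-- A Borel measure on the circle, regarded as a signed measure
(defined to be `0` if the measure is not finite). -/
def msigned (μ : Measure Circle) : SignedMeasure Circle :=
  if h : IsFiniteMeasure μ then @Measure.toSignedMeasure _ _ μ h else 0

/-!
By antipodal symmetry only the half circle `t ∈ [0, π]` matters. There, let `μ` be the
Lebesgue-Stieltjes measure of `g = ∂₋f`. Fubini gives
`∫_{(0, π]} |t - s| μ(ds) = ∫_0^t μ(0, u] du + ∫_t^π μ(u, π] du`, which the fundamental theorem of
calculus evaluates as `2 f(t) - f(0) - f(π) + (π - t) g(π+) - t g(0+)`. Since `g` is odd under the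
antipodal map `T`, `g(π+) = -g(0+)` and the part affine in `t` collapses to a constant. Hence the
potential of `m = μ / 2`, pushed forward to the circle, is `f` up to a constant, and passing to the
odd part `(m - T_# m) / 2` makes that constant `-π C / 2`, the opposite of the potential of `C·H¹`.
-/

section SignedMeasure

variable {X Y : Type*} [MeasurableSpace X] [MeasurableSpace Y]

instance isFiniteMeasure_variation (μ : SignedMeasure X) : IsFiniteMeasure μ.variation := by
  rw [← SignedMeasure.totalVariation_eq_variation]
  infer_instance

lemma integral_measureReal_prodMk_left (μ : SignedMeasure X) (ν : Measure Y) [IsFiniteMeasure ν]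
    {S : Set (X × Y)} (hS : MeasurableSet S) :
    ∫ᵛ x, ν.real (Prod.mk x ⁻¹' S) ∂<•μ = ∫ y, μ ((·, y) ⁻¹' S) ∂ν := by
  let B : ℝ →L[ℝ] ℝ →L[ℝ] ℝ := ContinuousLinearMap.lsmul ℝ ℝ
  have hB : B.flip = B := by ext; simp [B]
  have hswap : μ.prod ν.toSignedMeasure B = (ν.toSignedMeasure.prod μ B).map Prod.swap := by
    refine VectorMeasure.prod_eq_of_forall_apply_prod fun s t hs ht => ?_
    rw [VectorMeasure.map_apply _ measurable_swap (hs.prod ht), preimage_swap_prod,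
      VectorMeasure.prod_apply, ← ContinuousLinearMap.flip_apply, hB]
  calc ∫ᵛ x, ν.real (Prod.mk x ⁻¹' S) ∂<•μ
      = ∫ᵛ x, ν.toSignedMeasure (Prod.mk x ⁻¹' S) ∂<•μ := by
        simp_rw [Measure.toSignedMeasure_apply_measurable (measurable_prodMk_left hS)]
    _ = μ.prod ν.toSignedMeasure B S := (VectorMeasure.prod_apply_eq_integral hS).symm
    _ = ν.toSignedMeasure.prod μ B (Prod.swap ⁻¹' S) := by
        rw [hswap, VectorMeasure.map_apply _ measurable_swap hS]
    _ = ∫ᵛ y, μ ((·, y) ⁻¹' S) ∂<•ν.toSignedMeasure :=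
        VectorMeasure.prod_apply_eq_integral (measurable_swap hS)
    _ = ∫ y, μ ((·, y) ⁻¹' S) ∂ν := VectorMeasure.integral_toSignedMeasure

lemma setIntegral_sub_left_signedMeasure (μ : SignedMeasure ℝ) {a b : ℝ} (hab : a ≤ b) :
    ∫ᵛ s in Ioc a b, (b - s) ∂<•μ = ∫ u in a..b, μ (Ioc a u) := by
  have hS : MeasurableSet {p : ℝ × ℝ | p.1 ≤ p.2} := measurableSet_le measurable_fst measurable_snd
  calc ∫ᵛ s in Ioc a b, (b - s) ∂<•μ
      = ∫ᵛ s in Ioc a b, (volume.restrict (Ioc a b)).real (Prod.mk s ⁻¹' {p | p.1 ≤ p.2}) ∂<•μ := by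
        refine VectorMeasure.setIntegral_congr_fun fun s hs => ?_
        have hfiber : Prod.mk s ⁻¹' {p | p.1 ≤ p.2} ∩ Ioc a b = Icc s b := by
          ext; simp only [mem_inter_iff, mem_preimage, mem_ofPred_eq, mem_Ioc, mem_Icc]; grind
        rw [measureReal_restrict_apply (measurable_prodMk_left hS), hfiber,
          Real.volume_real_Icc_of_le hs.2]
    _ = ∫ u in Ioc a b, μ.restrict (Ioc a b) ((·, u) ⁻¹' {p | p.1 ≤ p.2}) :=
        integral_measureReal_prodMk_left _ _ hS
    _ = ∫ u in Ioc a b, μ (Ioc a u) := by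
        refine setIntegral_congr_fun measurableSet_Ioc fun u hu => ?_
        have hfiber : (·, u) ⁻¹' {p : ℝ × ℝ | p.1 ≤ p.2} ∩ Ioc a b = Ioc a u := by
          ext; simp only [mem_inter_iff, mem_preimage, mem_ofPred_eq, mem_Ioc]; grind
        rw [VectorMeasure.restrict_apply _ measurableSet_Ioc (measurable_prodMk_right hS), hfiber]
    _ = ∫ u in a..b, μ (Ioc a u) := (intervalIntegral.integral_of_le hab).symm

lemma setIntegral_sub_right_signedMeasure (μ : SignedMeasure ℝ) {a b : ℝ} (hab : a ≤ b) :
    ∫ᵛ s in Ioc a b, (s - a) ∂<•μ = ∫ u in a..b, μ (Ioc u b) := by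
  have hS : MeasurableSet {p : ℝ × ℝ | p.2 < p.1} := measurableSet_lt measurable_snd measurable_fst
  calc ∫ᵛ s in Ioc a b, (s - a) ∂<•μ
      = ∫ᵛ s in Ioc a b, (volume.restrict (Ioc a b)).real (Prod.mk s ⁻¹' {p | p.2 < p.1}) ∂<•μ := by
        refine VectorMeasure.setIntegral_congr_fun fun s hs => ?_
        have hfiber : Prod.mk s ⁻¹' {p | p.2 < p.1} ∩ Ioc a b = Ioo a s := by
          ext; simp only [mem_inter_iff, mem_preimage, mem_ofPred_eq, mem_Ioc, mem_Ioo]; grind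
        rw [measureReal_restrict_apply (measurable_prodMk_left hS), hfiber,
          Real.volume_real_Ioo_of_le hs.1.le]
    _ = ∫ u in Ioc a b, μ.restrict (Ioc a b) ((·, u) ⁻¹' {p | p.2 < p.1}) :=
        integral_measureReal_prodMk_left _ _ hS
    _ = ∫ u in Ioc a b, μ (Ioc u b) := by
        refine setIntegral_congr_fun measurableSet_Ioc fun u hu => ?_
        have hfiber : (·, u) ⁻¹' {p : ℝ × ℝ | p.2 < p.1} ∩ Ioc a b = Ioc u b := by
          ext; simp only [mem_inter_iff, mem_preimage, mem_ofPred_eq, mem_Ioc]; grind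
        rw [VectorMeasure.restrict_apply _ measurableSet_Ioc (measurable_prodMk_right hS), hfiber]
    _ = ∫ u in a..b, μ (Ioc u b) := (intervalIntegral.integral_of_le hab).symm

lemma setIntegral_abs_sub_signedMeasure (μ : SignedMeasure ℝ) {a b t : ℝ} (hat : a ≤ t)
    (htb : t ≤ b) :
    ∫ᵛ s in Ioc a b, |t - s| ∂<•μ
      = (∫ u in a..t, μ (Ioc a u)) + ∫ u in t..b, μ (Ioc u b) := by
  have hint : ∀ c d, μ.IntegrableOn (fun s => |t - s|) (Ioc c d) := fun c d =>
    have hcont : Continuous fun s => |t - s| := by fun_prop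
    Integrable.mono_measure hcont.integrableOn_Ioc VectorMeasure.variation_restrict_le
  rw [← Ioc_union_Ioc_eq_Ioc hat htb,
    VectorMeasure.setIntegral_union (Ioc_disjoint_Ioc_of_le le_rfl) measurableSet_Ioc
      measurableSet_Ioc (hint a t) (hint t b),
    ← setIntegral_sub_left_signedMeasure μ hat, ← setIntegral_sub_right_signedMeasure μ htb]
  congr 1
  · exact VectorMeasure.setIntegral_congr_fun fun s hs => abs_of_nonneg (sub_nonneg.2 hs.2)
  · exact VectorMeasure.setIntegral_congr_fun fun s hs => by
      rw [abs_sub_comm, abs_of_nonneg (sub_nonneg.2 hs.1.le)]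

lemma integral_toJordanDecomposition {f : X → ℝ} {μ : SignedMeasure X} (hf : μ.Integrable f) :
    ∫ᵛ x, f x ∂<•μ = (∫ x, f x ∂μ.toJordanDecomposition.posPart)
      - ∫ x, f x ∂μ.toJordanDecomposition.negPart := by
  have hle : ∀ ν : Measure X, ν ≤ μ.totalVariation → [IsFiniteMeasure ν] →
      ν.toSignedMeasure.Integrable f := fun ν hν _ => by
    rw [VectorMeasure.Integrable, Measure.variation_toSignedMeasure]
    rw [VectorMeasure.Integrable, ← SignedMeasure.totalVariation_eq_variation] at hf
    exact hf.mono_measure hν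
  conv_lhs => rw [← μ.toSignedMeasure_toJordanDecomposition, JordanDecomposition.toSignedMeasure]
  rw [VectorMeasure.integral_sub_vectorMeasure (hle _ (Measure.le_add_right le_rfl))
    (hle _ (Measure.le_add_left le_rfl)),
    VectorMeasure.integral_toSignedMeasure, VectorMeasure.integral_toSignedMeasure]

end SignedMeasure

section Circle

lemma dS1_exp_exp {t s : ℝ} (h : |t - s| ≤ π) : dS1 (Circle.exp t) (Circle.exp s) = |t - s| := by
  have hre : ((Circle.exp t : ℂ) * (starRingEnd ℂ) (Circle.exp s : ℂ)).re = Real.cos |t - s| := by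
    rw [← Circle.coe_inv_eq_conj, ← Circle.exp_neg, ← Circle.coe_mul, ← Circle.exp_add,
      ← sub_eq_add_neg, Circle.coe_exp, Complex.exp_ofReal_mul_I_re, Real.cos_abs]
  rw [dS1, hre, Real.arccos_cos (abs_nonneg _) h]

lemma coe_antipode (x : Circle) : (antipode x : ℂ) = -x := by
  simp [antipode, Circle.coe_exp]

lemma antipode_antipode (x : Circle) : antipode (antipode x) = x := by
  simp [Circle.ext_iff, coe_antipode]

lemma antipode_exp (t : ℝ) : antipode (Circle.exp t) = Circle.exp (t + π) := by
  rw [antipode, add_comm, Circle.exp_add]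

lemma antipode_mul_left (x y : Circle) : antipode (x * y) = x * antipode y := by
  rw [antipode, antipode, mul_left_comm]

lemma continuous_antipode : Continuous antipode := by
  unfold antipode
  fun_prop

lemma dS1_self (x : Circle) : dS1 x x = 0 := by
  simp [dS1, Complex.mul_conj]

lemma dS1_antipode_left (x y : Circle) : dS1 (antipode x) y = π - dS1 x y := by
  rw [dS1, dS1, ← Real.arccos_neg, coe_antipode, neg_mul, Complex.neg_re]

lemma dS1_antipode_right (x y : Circle) : dS1 x (antipode y) = π - dS1 x y := by
  rw [dS1, dS1, ← Real.arccos_neg, coe_antipode, map_neg, mul_neg, Complex.neg_re]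

lemma abs_dS1_le_pi (x y : Circle) : |dS1 x y| ≤ π :=
  (abs_of_nonneg (Real.arccos_nonneg _)).trans_le (Real.arccos_le_pi _)

lemma continuous_dS1 (x : Circle) : Continuous (dS1 x) := by
  unfold dS1
  fun_prop

lemma exists_eq_exp_or_eq_antipode_exp (x : Circle) :
    ∃ t ∈ Icc 0 π, x = Circle.exp t ∨ x = antipode (Circle.exp t) := by
  rcases le_total 0 (Complex.arg x) with h | h
  · exact ⟨Complex.arg x, ⟨h, Complex.arg_le_pi _⟩, Or.inl (Circle.exp_arg x).symm⟩
  · refine ⟨Complex.arg x + π, ⟨by linarith [Complex.neg_pi_lt_arg x], by linarith⟩, Or.inr ?_⟩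
    rw [← antipode_exp, antipode_antipode, Circle.exp_arg]

lemma LipschitzCircle.continuous {f : Circle → ℝ} (hf : LipschitzCircle f) : Continuous f := by
  obtain ⟨K, hK⟩ := hf
  refine continuous_iff_continuousAt.2 fun x => tendsto_iff_norm_sub_tendsto_zero.2 ?_
  have hbound : Tendsto (fun y => K * dS1 x y) (nhds x) (nhds 0) := by
    simpa [dS1_self] using ((continuous_dS1 x).const_mul K).tendsto x
  exact squeeze_zero (fun _ => norm_nonneg _)
    (fun y => (norm_sub_rev (f y) (f x)).trans_le (hK x y)) hbound

end Circle

section Potential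

lemma integrable_dS1_comp {X : Type*} [MeasurableSpace X] (μ : SignedMeasure X) {φ : X → Circle}
    (hφ : Measurable φ) (x : Circle) : μ.Integrable (dS1 x ∘ φ) :=
  Integrable.of_bound ((continuous_dS1 x).measurable.comp hφ).aestronglyMeasurable π
    (Eventually.of_forall fun y => abs_dS1_le_pi x (φ y))

lemma integrable_dS1 (l : SignedMeasure Circle) (x : Circle) : l.Integrable (dS1 x) :=
  integrable_dS1_comp l measurable_id x

lemma fRep_eq_integral (l : SignedMeasure Circle) (x : Circle) :
    fRep l x = ∫ᵛ y, dS1 x y ∂<•l :=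
  (integral_toJordanDecomposition (integrable_dS1 l x)).symm

lemma fRep_add (l m : SignedMeasure Circle) (x : Circle) :
    fRep (l + m) x = fRep l x + fRep m x := by
  simp only [fRep_eq_integral]
  exact VectorMeasure.integral_add_vectorMeasure (integrable_dS1 l x) (integrable_dS1 m x)

lemma fRep_sub (l m : SignedMeasure Circle) (x : Circle) :
    fRep (l - m) x = fRep l x - fRep m x := by
  simp only [fRep_eq_integral]
  exact VectorMeasure.integral_sub_vectorMeasure (integrable_dS1 l x) (integrable_dS1 m x)

lemma fRep_smul (c : ℝ) (l : SignedMeasure Circle) (x : Circle) :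
    fRep (c • l) x = c * fRep l x := by
  simp only [fRep_eq_integral]
  exact VectorMeasure.integral_smul_vectorMeasure (dS1 x) c

lemma fRep_map {X : Type*} [MeasurableSpace X] (μ : SignedMeasure X) {φ : X → Circle}
    (hφ : Measurable φ) (x : Circle) :
    fRep (μ.map φ) x = ∫ᵛ y, dS1 x (φ y) ∂<•μ := by
  rw [fRep_eq_integral, VectorMeasure.integral_map hφ (continuous_dS1 x).aestronglyMeasurable
    (integrable_dS1_comp μ hφ x)]

lemma fRep_antipode (l : SignedMeasure Circle) (x : Circle) :
    fRep l (antipode x) = π * l univ - fRep l x := by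
  simp only [fRep_eq_integral, dS1_antipode_left]
  rw [VectorMeasure.integral_fun_sub (integrable_const _) (integrable_dS1 l x),
    VectorMeasure.integral_const, ContinuousLinearMap.flip_apply, ContinuousLinearMap.lsmul_apply,
    smul_eq_mul, mul_comm]

lemma fRep_map_antipode (l : SignedMeasure Circle) (x : Circle) :
    fRep (l.map antipode) x = π * l univ - fRep l x := by
  rw [fRep_map l continuous_antipode.measurable, ← fRep_antipode, fRep_eq_integral]
  simp only [dS1_antipode_left, dS1_antipode_right]

lemma fRep_hausOne (x : Circle) : fRep hausOne.toSignedMeasure x = π / 2 := by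
  have hc : Continuous fun s => dS1 x (Circle.exp s) :=
    (continuous_dS1 x).comp Circle.exp.continuous
  have hint : ∀ a b, IntervalIntegrable (fun s => dS1 x (Circle.exp s)) volume a b :=
    hc.intervalIntegrable
  have hsecond : ∫ s in π..2 * π, dS1 x (Circle.exp s)
      = π * π - ∫ s in 0..π, dS1 x (Circle.exp s) := by
    calc ∫ s in π..2 * π, dS1 x (Circle.exp s)
        = ∫ s in 0..π, dS1 x (Circle.exp (s + π)) := by
          rw [intervalIntegral.integral_comp_add_right fun s => dS1 x (Circle.exp s), zero_add,
            two_mul]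
      _ = ∫ s in 0..π, (π - dS1 x (Circle.exp s)) := by
          simp only [← antipode_exp, dS1_antipode_right]
      _ = π * π - ∫ s in 0..π, dS1 x (Circle.exp s) := by
          rw [intervalIntegral.integral_sub intervalIntegrable_const (hint 0 π)]
          simp
  have hcircle : ∫ s in 0..2 * π, dS1 x (Circle.exp s) = π * π := by
    rw [← intervalIntegral.integral_add_adjacent_intervals (hint 0 π) (hint π (2 * π)), hsecond,
      add_sub_cancel]
  rw [fRep_eq_integral, VectorMeasure.integral_toSignedMeasure, hausOne, integral_smul_measure,
    integral_map Circle.exp.continuous.aemeasurable (continuous_dS1 x).aestronglyMeasurable,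
    integral_Ico_eq_integral_Ioc, ← intervalIntegral.integral_of_le two_pi_pos.le, hcircle,
    ENNReal.toReal_inv, ENNReal.toReal_ofReal two_pi_pos.le, smul_eq_mul]
  field_simp

lemma fRep_map_exp_restrict (μ : SignedMeasure ℝ) {t : ℝ} (ht : t ∈ Icc 0 π) :
    fRep ((μ.restrict (Ioc 0 π)).map Circle.exp) (Circle.exp t)
      = ∫ᵛ s in Ioc 0 π, |t - s| ∂<•μ := by
  rw [fRep_map _ Circle.exp.continuous.measurable]
  refine VectorMeasure.setIntegral_congr_fun fun s hs => dS1_exp_exp ?_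
  exact abs_sub_le_iff.2 ⟨by linarith [ht.2, hs.1], by linarith [ht.1, hs.2]⟩

lemma map_antipode_map_antipode (m : SignedMeasure Circle) :
    (m.map antipode).map antipode = m := by
  have hT := continuous_antipode.measurable
  ext s hs
  rw [VectorMeasure.map_apply _ hT hs, VectorMeasure.map_apply _ hT (hT hs), ← preimage_comp,
    (funext antipode_antipode : antipode ∘ antipode = id), preimage_id]

/-- The odd part `(m - T_# m) / 2` of a signed measure `m` with respect to the antipodal map `T`:
the projection of `m` onto the signed measures `l` with `T_# l = -l`. -/
def oddPart (m : SignedMeasure Circle) : SignedMeasure Circle := (1 / 2 : ℝ) • (m - m.map antipode)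

lemma map_antipode_oddPart (m : SignedMeasure Circle) :
    (oddPart m).map antipode = -oddPart m := by
  have hsub : (m - m.map antipode).map antipode = m.map antipode - m := by
    simpa [VectorMeasure.mapGm, map_antipode_map_antipode] using
      map_sub (VectorMeasure.mapGm antipode) m (m.map antipode)
  rw [oddPart, VectorMeasure.map_smul, hsub]
  module

lemma fRep_oddPart (m : SignedMeasure Circle) (x : Circle) :
    fRep (oddPart m) x = fRep m x - π / 2 * m univ := by
  rw [oddPart, fRep_smul, fRep_sub, fRep_map_antipode]
  ring

lemma fRep_oddPart_antipode (m : SignedMeasure Circle) (x : Circle) :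
    fRep (oddPart m) (antipode x) = -fRep (oddPart m) x := by
  rw [fRep_oddPart, fRep_oddPart, fRep_antipode]
  ring

end Potential

section BoundedVariation

variable {E : Type*} [NormedAddCommGroup E] {F g : ℝ → ℝ} {G G' : ℝ → E} {a b t : ℝ}

lemma countable_not_continuousAt_of_boundedVariationOn (hg : BoundedVariationOn g univ) :
    {x | ¬ContinuousAt g x}.Countable := by
  obtain ⟨p, q, hp, hq, rfl⟩ := hg.locallyBoundedVariationOn.exists_monotoneOn_sub_monotoneOn
  rw [monotoneOn_univ] at hp hq
  refine (hp.countable_not_continuousAt.union hq.countable_not_continuousAt).mono fun x hx => ?_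
  by_contra h
  simp only [mem_union, mem_ofPred_eq, not_or, not_not] at h
  exact hx (h.1.sub h.2)

lemma rightLim_ae_eq_of_boundedVariationOn (hg : BoundedVariationOn g univ) :
    g.rightLim =ᵐ[volume] g := by
  filter_upwards [(countable_not_continuousAt_of_boundedVariationOn hg).ae_notMem volume] with x hx
  exact (not_not.1 hx).continuousWithinAt.rightLim_eq

lemma intervalIntegrable_of_boundedVariationOn (hg : BoundedVariationOn g univ) :
    IntervalIntegrable g volume a b := by
  obtain ⟨p, q, hp, hq, rfl⟩ := hg.locallyBoundedVariationOn.exists_monotoneOn_sub_monotoneOn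
  rw [monotoneOn_univ] at hp hq
  exact hp.intervalIntegrable.sub hq.intervalIntegrable

lemma integral_eq_sub_of_hasDerivWithinAt_Iio [NormedSpace ℝ E] [CompleteSpace E] (hab : a ≤ b)
    (hG : ContinuousOn G (Icc a b)) (hderiv : ∀ x ∈ Ioo a b, HasDerivWithinAt G (G' x) (Iio x) x)
    (hint : IntervalIntegrable G' volume a b) :
    ∫ x in a..b, G' x = G b - G a := by
  have hneg : MapsTo (fun x : ℝ => -x) (Icc (-b) (-a)) (Icc a b) := fun x hx =>
    ⟨le_neg.1 hx.2, neg_le.1 hx.1⟩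
  have hreflect : ∫ x in -b..-a, -G' (-x) = G (- -a) - G (- -b) := by
    refine intervalIntegral.integral_eq_sub_of_hasDeriv_right_of_le (f := fun x => G (-x))
      (neg_le_neg hab) (hG.comp continuous_neg.continuousOn hneg) (fun x hx => ?_) ?_
    · have hcomp := (hderiv (-x) ⟨lt_neg.1 hx.2, neg_lt.1 hx.1⟩).scomp x
        (hasDerivWithinAt_neg x (Ioi x)) fun y hy => neg_lt_neg (mem_Ioi.1 hy)
      simpa [Function.comp_def] using hcomp
    · exact ((IntervalIntegrable.iff_comp_neg (by simp)).1 hint).neg.symm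
  rw [intervalIntegral.integral_neg, intervalIntegral.integral_comp_neg G', neg_neg, neg_neg,
    neg_eq_iff_eq_neg, neg_sub] at hreflect
  exact hreflect

lemma setIntegral_abs_sub_vectorMeasure (hg : BoundedVariationOn g univ)
    (hF : ContinuousOn F (Icc a b))
    (hderiv : ∀ x ∈ Ioo a b, HasDerivWithinAt F (g x) (Iio x) x) (ht : t ∈ Icc a b) :
    ∫ᵛ s in Ioc a b, |t - s| ∂<•hg.vectorMeasure
      = 2 * F t - F a - F b + (b - t) * g.rightLim b - (t - a) * g.rightLim a := by
  have hint : ∀ c d, IntervalIntegrable g volume c d := fun c d =>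
    intervalIntegrable_of_boundedVariationOn hg
  have hae := rightLim_ae_eq_of_boundedVariationOn hg
  have hleft : ∫ u in a..t, hg.vectorMeasure (Ioc a u)
      = F t - F a - (t - a) * g.rightLim a := by
    calc ∫ u in a..t, hg.vectorMeasure (Ioc a u)
        = ∫ u in a..t, (g u - g.rightLim a) := by
          refine intervalIntegral.integral_congr_ae (hae.mono fun u hu hmem => ?_)
          rw [uIoc_of_le ht.1] at hmem
          rw [hg.vectorMeasure_Ioc hmem.1.le, hu]
      _ = F t - F a - (t - a) * g.rightLim a := by
          rw [intervalIntegral.integral_sub (hint a t) intervalIntegrable_const,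
            integral_eq_sub_of_hasDerivWithinAt_Iio ht.1 (hF.mono (Icc_subset_Icc_right ht.2))
              (fun x hx => hderiv x (Ioo_subset_Ioo_right ht.2 hx)) (hint a t),
            intervalIntegral.integral_const, smul_eq_mul]
  have hright : ∫ u in t..b, hg.vectorMeasure (Ioc u b)
      = (b - t) * g.rightLim b - (F b - F t) := by
    calc ∫ u in t..b, hg.vectorMeasure (Ioc u b)
        = ∫ u in t..b, (g.rightLim b - g u) := by
          refine intervalIntegral.integral_congr_ae (hae.mono fun u hu hmem => ?_)
          rw [uIoc_of_le ht.2] at hmem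
          rw [hg.vectorMeasure_Ioc hmem.2, hu]
      _ = (b - t) * g.rightLim b - (F b - F t) := by
          rw [intervalIntegral.integral_sub intervalIntegrable_const (hint t b),
            integral_eq_sub_of_hasDerivWithinAt_Iio ht.2 (hF.mono (Icc_subset_Icc_left ht.1))
              (fun x hx => hderiv x (Ioo_subset_Ioo_left ht.1 hx)) (hint t b),
            intervalIntegral.integral_const, smul_eq_mul]
  rw [setIntegral_abs_sub_signedMeasure _ ht.1 ht.2, hleft, hright]
  ring

lemma boundedVariationOn_comp_projIcc (hab : a ≤ b) (hG : BoundedVariationOn G (Icc a b)) :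
    BoundedVariationOn (fun x => G (projIcc a b hab x)) univ :=
  ne_top_of_le_ne_top hG <| eVariationOn.comp_le_of_monotoneOn G (fun x => (projIcc a b hab x : ℝ))
    ((Subtype.mono_coe _).comp (monotone_projIcc hab) |>.monotoneOn _)
    fun x _ => (projIcc a b hab x).2

lemma rightLim_add_eq_neg [CompleteSpace E] (hG : BoundedVariationOn G univ) (c : ℝ)
    (h : ∀ᶠ u in nhdsWithin a (Ioi a), G (u + c) = -G u) :
    G.rightLim (a + c) = -G.rightLim a := by
  have hshift : Tendsto (fun u => u + c) (nhdsWithin a (Ioi a))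
      (nhdsWithin (a + c) (Ioi (a + c))) :=
    (continuous_add_const c).continuousWithinAt.tendsto_nhdsWithin fun u hu =>
      add_lt_add_left (mem_Ioi.1 hu) c
  exact tendsto_nhds_unique ((hG.tendsto_rightLim (a + c)).comp hshift)
    ((hG.tendsto_rightLim a).neg.congr' (h.mono fun u hu => hu.symm))

end BoundedVariation

section LeftDerivative

variable {f f' : Circle → ℝ}

lemma HasLeftDerivCircleAt.hasDerivWithinAt_comp_exp {L t : ℝ}
    (h : HasLeftDerivCircleAt f L (Circle.exp t)) :
    HasDerivWithinAt (fun s => f (Circle.exp s)) L (Iio t) t := by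
  rw [hasDerivWithinAt_iff_tendsto_slope' self_notMem_Iio]
  have hshift : Tendsto (fun s => s - t) (nhdsWithin t (Iio t)) (nhdsWithin 0 (Iio 0)) := by
    have hcont : ContinuousWithinAt (fun s => s - t) (Iio t) t := by fun_prop
    simpa using hcont.tendsto_nhdsWithin fun s hs =>
      (mem_Iio.2 (sub_neg.2 (mem_Iio.1 hs)) : s - t ∈ Iio 0)
  refine (h.comp hshift).congr fun s => ?_
  rw [Function.comp_apply, ← Circle.exp_add, sub_add_cancel, slope_def_field]

lemma leftDeriv_antipode {c : ℝ} (hA : ∀ x, f x + f (antipode x) = c)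
    (hf' : ∀ x, HasLeftDerivCircleAt f (f' x) x) (x : Circle) : f' (antipode x) = -f' x := by
  refine tendsto_nhds_unique (hf' (antipode x)) ((hf' x).neg.congr fun s => ?_)
  rw [← antipode_mul_left, ← neg_div]
  congr 1
  linarith [hA x, hA (Circle.exp s * x)]

/-- The lift of a function on the circle to `[0, 2π]`, extended to `ℝ` by its values at the
endpoints. Unlike the periodic lift, it has bounded variation on all of `ℝ` as soon as the total
variation on the circle is finite. -/
def clampedLift (f : Circle → ℝ) (t : ℝ) : ℝ :=
  f (Circle.exp (projIcc 0 (2 * π) two_pi_pos.le t))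

lemma clampedLift_of_mem {t : ℝ} (ht : t ∈ Icc 0 (2 * π)) :
    clampedLift f t = f (Circle.exp t) := by
  rw [clampedLift, projIcc_of_mem _ ht]

lemma boundedVariationOn_clampedLift (hTV : circleTV f ≠ ⊤) :
    BoundedVariationOn (clampedLift f) univ :=
  boundedVariationOn_comp_projIcc (G := fun t => f (Circle.exp t)) two_pi_pos.le hTV

lemma rightLim_clampedLift_pi (hTV : circleTV f ≠ ⊤) (hodd : ∀ x, f (antipode x) = -f x) :
    (clampedLift f).rightLim π = -(clampedLift f).rightLim 0 := by
  rw [← zero_add π]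
  refine rightLim_add_eq_neg (boundedVariationOn_clampedLift hTV) π ?_
  filter_upwards [Ioo_mem_nhdsGT pi_pos] with u hu
  rw [clampedLift_of_mem ⟨by linarith [hu.1, pi_pos], by linarith [hu.2]⟩,
    clampedLift_of_mem ⟨hu.1.le, by linarith [hu.2, pi_pos]⟩, ← antipode_exp, hodd]

end LeftDerivative

section Representation

variable {f f' : Circle → ℝ}

/-- Half the Lebesgue-Stieltjes measure of the clamped lift of `g` on `(0, π]`, pushed forward to
the circle. -/
def halfStieltjes {g : Circle → ℝ} (hTV : circleTV g ≠ ⊤) : SignedMeasure Circle :=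
  (1 / 2 : ℝ) •
    ((boundedVariationOn_clampedLift hTV).vectorMeasure.restrict (Ioc 0 π)).map Circle.exp

lemma fRep_halfStieltjes {c : ℝ} (hA : ∀ x, f x + f (antipode x) = c) (hf : Continuous f)
    (hf' : ∀ x, HasLeftDerivCircleAt f (f' x) x) (hTV : circleTV f' ≠ ⊤) {t : ℝ}
    (ht : t ∈ Icc 0 π) :
    fRep (halfStieltjes hTV) (Circle.exp t)
      = f (Circle.exp t) - c / 2 - π / 2 * (clampedLift f').rightLim 0 := by
  have hderiv : ∀ s ∈ Ioo 0 π,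
      HasDerivWithinAt (fun s => f (Circle.exp s)) (clampedLift f' s) (Iio s) s := fun s hs => by
    rw [clampedLift_of_mem ⟨hs.1.le, by linarith [hs.2, pi_pos]⟩]
    exact (hf' _).hasDerivWithinAt_comp_exp
  have hends : f (Circle.exp 0) + f (Circle.exp π) = c := by
    rw [← hA (Circle.exp 0), antipode_exp, zero_add]
  rw [halfStieltjes, fRep_smul, fRep_map_exp_restrict _ ht,
    setIntegral_abs_sub_vectorMeasure (F := fun s => f (Circle.exp s)) _
      (hf.comp Circle.exp.continuous).continuousOn hderiv ht,
    rightLim_clampedLift_pi hTV (leftDeriv_antipode hA hf')]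
  linear_combination -hends / 2

lemma halfStieltjes_univ {g : Circle → ℝ} (hTV : circleTV g ≠ ⊤)
    (hodd : ∀ x, g (antipode x) = -g x) :
    halfStieltjes hTV univ = -(clampedLift g).rightLim 0 := by
  have hmass := (boundedVariationOn_clampedLift hTV).vectorMeasure_Ioc pi_pos.le
  rw [halfStieltjes, smul_apply,
    VectorMeasure.map_apply _ Circle.exp.continuous.measurable MeasurableSet.univ, preimage_univ,
    VectorMeasure.restrict_apply _ measurableSet_Ioc MeasurableSet.univ, univ_inter, hmass,
    rightLim_clampedLift_pi hTV hodd, smul_eq_mul]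
  ring

lemma fRep_oddPart_halfStieltjes {c : ℝ} (hA : ∀ x, f x + f (antipode x) = c)
    (hf : Continuous f) (hf' : ∀ x, HasLeftDerivCircleAt f (f' x) x) (hTV : circleTV f' ≠ ⊤)
    (x : Circle) :
    fRep (oddPart (halfStieltjes hTV)) x = f x - c / 2 := by
  have hhalf : ∀ t ∈ Icc 0 π,
      fRep (oddPart (halfStieltjes hTV)) (Circle.exp t) = f (Circle.exp t) - c / 2 := fun t ht => by
    rw [fRep_oddPart, fRep_halfStieltjes hA hf hf' hTV ht,
      halfStieltjes_univ hTV (leftDeriv_antipode hA hf')]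
    ring
  obtain ⟨t, ht, rfl | rfl⟩ := exists_eq_exp_or_eq_antipode_exp x
  · exact hhalf t ht
  · rw [fRep_oddPart_antipode, hhalf t ht]
    linarith [hA (Circle.exp t)]

end Representation

/-- If `f` satisfies (A) `f(x) + f(-x) = πC` and (B) `f` is Lipschitz,
left-differentiable with `‖∂₋f‖_{TV(S¹)} < ∞`, then there is a signed measure `λ`
with `T_#λ = -λ` such that `f = f_{λ + C·H¹}`. -/
theorem stmt1 (C : ℝ) (f : Circle → ℝ)
    (hA : ∀ x : Circle, f x + f (antipode x) = π * C)
    (hLip : LipschitzCircle f)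
    (f' : Circle → ℝ) (hf' : ∀ x : Circle, HasLeftDerivCircleAt f (f' x) x)
    (hTV : circleTV f' ≠ ⊤) :
    ∃ lam : SignedMeasure Circle, lam.map antipode = -lam ∧
      ∀ x : Circle, f x = fRep (lam + C • hausOne.toSignedMeasure) x := by
  refine ⟨oddPart (halfStieltjes hTV), map_antipode_oddPart _, fun x => ?_⟩
  rw [fRep_add, fRep_smul, fRep_hausOne, fRep_oddPart_halfStieltjes hA hLip.continuous hf' hTV]
  ring

end CirclePaper
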